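/- Let ρ₀ satisfy the stated first-order equation with a < ρ₀ < b, normalized so that b·ln((ρ₀(0) − a)/(ρ₀(0) + a)) − a·ln((b − ρ₀(0))/(b + ρ₀(0))) = 0. Then for every z ∈ ℝ: b² − ρ₀(z)² = (b + ρ₀(z))² · ((ρ₀(z) − a)/(ρ₀(z) + a))^{b/a} · exp(−√2 b(b² − a²) z) and ρ₀(z)² − a² = (a + ρ₀(z))² · ((b − ρ₀(z))/(b + ρ₀(z)))^{a/b} · exp(√2 a(b² − a²) z). -/

import Mathlib

/-!
Separating variables and decomposing `1 / ((ρ² - a²) (b² - ρ²))` into partial fractions, the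
function `b log ((ρ - a) / (ρ + a)) - a log ((b - ρ) / (b + ρ))` is affine in `z` along every
solution. With `u = (ρ - a) / (ρ + a)` and `v = (b - ρ) / (b + ρ)`, exponentiating this relation
gives `v` in terms of `u` or `u` in terms of `v`, and `b² - ρ² = (b + ρ)² v`,
`ρ² - a² = (a + ρ)² u`.
-/

section OrderedField

variable {K : Type*} [Field K]

theorem sq_sub_sq_eq_add_sq_mul_sub_div_add (x y : K) :
    x ^ 2 - y ^ 2 = (x + y) ^ 2 * ((x - y) / (x + y)) := by
  rw [mul_div_left_comm, sq (x + y), mul_self_div_self]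
  ring

variable [LinearOrder K] [IsStrictOrderedRing K]

theorem sub_div_add_pos_of_sq_lt_sq {x y : K} (h : y ^ 2 < x ^ 2) : 0 < (x - y) / (x + y) := by
  have hmul : 0 < (x - y) * (x + y) := by linarith
  exact div_pos_iff.2 (mul_pos_iff.1 hmul)

end OrderedField

theorem eq_add_smul_of_hasDerivAt_const {𝕜 E : Type*} [RCLike 𝕜] [NormedAddCommGroup E]
    [NormedSpace 𝕜 E] {f : 𝕜 → E} {k : E} (hf : ∀ z, HasDerivAt f k z) (w z : 𝕜) :
    f z = f w + (z - w) • k := by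
  have hzero : ∀ x, HasDerivAt (fun y ↦ f y - (y - w) • k) 0 x := fun x ↦ by
    simpa using (hf x).fun_sub (((hasDerivAt_id x).sub_const w).smul_const k)
  have hconst := is_const_of_deriv_eq_zero (fun x ↦ (hzero x).differentiableAt)
    (fun x ↦ (hzero x).deriv) z w
  simpa [sub_eq_iff_eq_add] using hconst

theorem eq_rpow_mul_exp_of_mul_log_sub_mul_log_eq {p q t u v : ℝ} (hq : q ≠ 0) (hu : 0 < u)
    (hv : 0 < v) (h : p * Real.log u - q * Real.log v = t) :
    v = u ^ (p / q) * Real.exp (-t / q) := by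
  have hlog : Real.log v = Real.log u * (p / q) + -t / q := by
    field_simp
    linarith
  rw [Real.rpow_def_of_pos hu, ← Real.exp_add, ← hlog, Real.exp_log hv]

theorem hasDerivAt_log_sub_div_add {a x : ℝ} (h : x ^ 2 ≠ a ^ 2) :
    HasDerivAt (fun y ↦ Real.log ((y - a) / (y + a))) (2 * a / (x ^ 2 - a ^ 2)) x := by
  have hfactor : x ^ 2 - a ^ 2 = (x + a) * (x - a) := sq_sub_sq x a
  obtain ⟨hadd, hsub⟩ := mul_ne_zero_iff.1 (hfactor ▸ sub_ne_zero.2 h)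
  have hquot := ((hasDerivAt_id x).sub_const a).fun_div ((hasDerivAt_id x).add_const a) hadd
  refine (hquot.log (div_ne_zero hsub hadd)).congr_deriv ?_
  simp only [id, hfactor]
  field_simp
  ring

/-- The function of `x = ρ z` that is affine in `z` along solutions of
`ρ' = c (ρ² - a²) (b² - ρ²)`: up to the factor `2 a b (b² - a²)` it is the primitive of
`1 / ((x² - a²) (b² - x²))` obtained by partial fractions. -/
noncomputable def logPotential (a b x : ℝ) : ℝ :=
  b * Real.log ((x - a) / (x + a)) - a * Real.log ((b - x) / (b + x))

section LogPotential

variable {a b c t x : ℝ}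

theorem hasDerivAt_logPotential (hxa : x ^ 2 ≠ a ^ 2) (hxb : x ^ 2 ≠ b ^ 2) :
    HasDerivAt (logPotential a b)
      (2 * a * b * (b ^ 2 - a ^ 2) / ((x ^ 2 - a ^ 2) * (b ^ 2 - x ^ 2))) x := by
  -- `Real.log` is even, so both logarithms are instances of `log ((y - r) / (y + r))`.
  have heven : ∀ y, Real.log ((b - y) / (b + y)) = Real.log ((y - b) / (y + b)) := fun y ↦ by
    rw [← Real.log_neg_eq_log, ← neg_div, neg_sub, add_comm]
  have hsum := ((hasDerivAt_log_sub_div_add hxa).const_mul b).fun_sub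
    ((hasDerivAt_log_sub_div_add hxb).const_mul a)
  simp only [← heven] at hsum
  refine hsum.congr_deriv ?_
  have hsub_a : x ^ 2 - a ^ 2 ≠ 0 := sub_ne_zero.2 hxa
  have hsub_b : b ^ 2 - x ^ 2 ≠ 0 := sub_ne_zero.2 hxb.symm
  rw [← neg_sub (b ^ 2) (x ^ 2)]
  field_simp
  ring

theorem logPotential_comp_eq_add_mul {ρ : ℝ → ℝ}
    (hρ : ∀ z, HasDerivAt ρ (c * (ρ z ^ 2 - a ^ 2) * (b ^ 2 - ρ z ^ 2)) z)
    (hρa : ∀ z, ρ z ^ 2 ≠ a ^ 2) (hρb : ∀ z, ρ z ^ 2 ≠ b ^ 2) (z : ℝ) :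
    logPotential a b (ρ z) =
      logPotential a b (ρ 0) + 2 * a * b * c * (b ^ 2 - a ^ 2) * z := by
  have hderiv : ∀ y,
      HasDerivAt (logPotential a b ∘ ρ) (2 * a * b * c * (b ^ 2 - a ^ 2)) y := fun y ↦ by
    refine ((hasDerivAt_logPotential (hρa y) (hρb y)).comp y (hρ y)).congr_deriv ?_
    have hsub_a : ρ y ^ 2 - a ^ 2 ≠ 0 := sub_ne_zero.2 (hρa y)
    have hsub_b : b ^ 2 - ρ y ^ 2 ≠ 0 := sub_ne_zero.2 (hρb y).symm
    field_simp
  simpa [mul_comm z] using eq_add_smul_of_hasDerivAt_const hderiv 0 z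

theorem upper_sq_sub_sq_eq_of_logPotential_eq (ha : a ≠ 0) (hax : a ^ 2 < x ^ 2)
    (hxb : x ^ 2 < b ^ 2) (h : logPotential a b x = t) :
    b ^ 2 - x ^ 2 = (b + x) ^ 2 * ((x - a) / (x + a)) ^ (b / a) * Real.exp (-t / a) := by
  rw [sq_sub_sq_eq_add_sq_mul_sub_div_add b x, mul_assoc,
    ← eq_rpow_mul_exp_of_mul_log_sub_mul_log_eq ha (sub_div_add_pos_of_sq_lt_sq hax)
      (sub_div_add_pos_of_sq_lt_sq hxb) h]

theorem sq_sub_lower_sq_eq_of_logPotential_eq (hax : a ^ 2 < x ^ 2) (hxb : x ^ 2 < b ^ 2)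
    (h : logPotential a b x = t) :
    x ^ 2 - a ^ 2 = (a + x) ^ 2 * ((b - x) / (b + x)) ^ (a / b) * Real.exp (t / b) := by
  have hb : b ≠ 0 := sq_pos_iff.1 ((sq_nonneg x).trans_lt hxb)
  have hswap : a * Real.log ((b - x) / (b + x)) - b * Real.log ((x - a) / (x + a)) = -t := by
    rw [← h, logPotential, neg_sub]
  have hquot := eq_rpow_mul_exp_of_mul_log_sub_mul_log_eq hb (sub_div_add_pos_of_sq_lt_sq hxb)
    (sub_div_add_pos_of_sq_lt_sq hax) hswap
  rw [neg_neg] at hquot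
  rw [sq_sub_sq_eq_add_sq_mul_sub_div_add x a, mul_assoc, ← hquot, add_comm x a]

end LogPotential

/-- If `ρ₀' = (√2/2)(ρ₀² − a²)(b² − ρ₀²)` with `a < ρ₀ < b`, normalized by
`b ln((ρ₀(0) − a)/(ρ₀(0) + a)) − a ln((b − ρ₀(0))/(b + ρ₀(0))) = 0`, then for all `z`:
`b² − ρ₀² = (b + ρ₀)² ((ρ₀ − a)/(ρ₀ + a))^{b/a} e^{−√2 b(b² − a²) z}` and
`ρ₀² − a² = (a + ρ₀)² ((b − ρ₀)/(b + ρ₀))^{a/b} e^{√2 a(b² − a²) z}`. -/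
theorem statement6 (a b : ℝ) (ha : 0 < a) (hab : a < b) (ρ₀ : ℝ → ℝ)
    (hreg : ContDiff ℝ 1 ρ₀)
    (hderiv : ∀ z, deriv ρ₀ z =
      Real.sqrt 2 / 2 * ((ρ₀ z) ^ 2 - a ^ 2) * (b ^ 2 - (ρ₀ z) ^ 2))
    (hbnd : ∀ z, a < ρ₀ z ∧ ρ₀ z < b)
    (hnorm : b * Real.log ((ρ₀ 0 - a) / (ρ₀ 0 + a))
      - a * Real.log ((b - ρ₀ 0) / (b + ρ₀ 0)) = 0) :
    ∀ z : ℝ,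
      b ^ 2 - (ρ₀ z) ^ 2 = (b + ρ₀ z) ^ 2 * ((ρ₀ z - a) / (ρ₀ z + a)) ^ (b / a)
        * Real.exp (-(Real.sqrt 2) * b * (b ^ 2 - a ^ 2) * z) ∧
      (ρ₀ z) ^ 2 - a ^ 2 = (a + ρ₀ z) ^ 2 * ((b - ρ₀ z) / (b + ρ₀ z)) ^ (a / b)
        * Real.exp (Real.sqrt 2 * a * (b ^ 2 - a ^ 2) * z) := by
  have hb : 0 < b := ha.trans hab
  have hlower : ∀ z, a ^ 2 < ρ₀ z ^ 2 := fun z ↦ pow_lt_pow_left₀ (hbnd z).1 ha.le two_ne_zero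
  have hupper : ∀ z, ρ₀ z ^ 2 < b ^ 2 := fun z ↦
    pow_lt_pow_left₀ (hbnd z).2 (ha.trans (hbnd z).1).le two_ne_zero
  have hode : ∀ z, HasDerivAt ρ₀
      (Real.sqrt 2 / 2 * (ρ₀ z ^ 2 - a ^ 2) * (b ^ 2 - ρ₀ z ^ 2)) z := fun z ↦
    hderiv z ▸ (hreg.differentiable one_ne_zero z).hasDerivAt
  intro z
  have hpotential : logPotential a b (ρ₀ z) = Real.sqrt 2 * a * b * (b ^ 2 - a ^ 2) * z := by
    have hinitial : logPotential a b (ρ₀ 0) = 0 := hnorm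
    rw [logPotential_comp_eq_add_mul hode (fun w ↦ (hlower w).ne') (fun w ↦ (hupper w).ne) z,
      hinitial]
    ring
  constructor
  · convert upper_sq_sub_sq_eq_of_logPotential_eq ha.ne' (hlower z) (hupper z) hpotential using 3
    field_simp
  · convert sq_sub_lower_sq_eq_of_logPotential_eq (hlower z) (hupper z) hpotential using 3
    field_simp
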